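/- Let A be a complete non-archimedean normed (possibly non-unital, non-associative) ring and let d : A → A be a contracting additive endomorphism with d ∘ d = 0 that satisfies the Leibniz rule d(x·z) = (d x)·z + x·(d z) for all x, z ∈ A. Suppose there exists e ∈ A with d e = 0 and ‖e‖ < 1 such that for every z ∈ A with d z = 0 the element e·z − z lies in the range of d (i.e. the class of e acts as a left unit on the homology of (A, d)). Then every z ∈ A with d z = 0 lies in the range of d; that is, the homology of (A, d) vanishes. (This is the abstract algebraic core of the paper's Proposition that the vanishing of reduced relative symplectic cohomology SH^red_M(K;Λ) = 0 — equivalently, that the unit of SH_M(K;Λ) has infinite valuation, hence admits chain representatives of arbitrarily small norm — implies SH_M(K;Λ) = 0.) -/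

import Mathlib

/-!
If `T` contracts a complete normed group, then `x ↦ T x - x` is bijective: its fibre over `w` is the
set of fixed points of the contraction `x ↦ T x - w`. Left multiplication by a closed element `e`
with `‖e‖ < 1` is such a `T`, and by the Leibniz rule it commutes with `d`. A cycle `z` with
`e·z - z = d w` is therefore a boundary: solve `e·β - β = w`; then `d β` and `z` have the same image
under `T - id`, so `z = d β`.
-/

open Function
open scoped NNReal

theorem isFixedPt_sub_const_iff {G : Type*} [AddCommGroup G] {T : G → G} {w x : G} :
    IsFixedPt (fun y ↦ T y - w) x ↔ T x - x = w :=
  sub_eq_iff_eq_add.trans sub_eq_iff_eq_add'.symm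

section Contraction

variable {E : Type*} [NormedAddCommGroup E] {K : ℝ≥0}

theorem contractingWith_of_norm_map_le {L : E →+ E} (hK : K < 1) (hL : ∀ x, ‖L x‖ ≤ K * ‖x‖) :
    ContractingWith K L :=
  ⟨hK, AddMonoidHomClass.lipschitz_of_bound_nnnorm L K hL⟩

variable {T : E → E}

theorem contractingWith_sub_const (hT : ContractingWith K T) (w : E) :
    ContractingWith K fun x ↦ T x - w :=
  ⟨hT.1, fun x y ↦ (edist_sub_right (T x) (T y) w).trans_le (hT.2 x y)⟩

theorem injective_sub_id_of_contractingWith (hT : ContractingWith K T) :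
    Injective fun x ↦ T x - x := fun x _ hxy ↦
  (contractingWith_sub_const hT (T x - x)).fixedPoint_unique'
    (isFixedPt_sub_const_iff.mpr rfl) (isFixedPt_sub_const_iff.mpr hxy.symm)

theorem surjective_sub_id_of_contractingWith [CompleteSpace E] (hT : ContractingWith K T) :
    Surjective fun x ↦ T x - x := fun w ↦
  ⟨_, isFixedPt_sub_const_iff.mp (contractingWith_sub_const hT w).fixedPoint_isFixedPt⟩

end Contraction

theorem commute_mul_left_of_leibniz {A : Type*} [AddGroup A] {mul : A → A → A} {d : A → A} {e : A}
    (right_distrib : ∀ x y z, mul (x + y) z = mul x z + mul y z)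
    (leibniz : ∀ z, d (mul e z) = mul (d e) z + mul e (d z)) (he : d e = 0) :
    Function.Commute d (mul e) := fun z ↦ by
  have zero_mul : mul 0 z = 0 := by simpa only [add_zero, left_eq_add] using right_distrib 0 0 z
  rw [leibniz, he, zero_mul, zero_add]

theorem homology_vanishes_of_small_unit_general
    {A B : Type*} [NormedAddCommGroup A] [NormedAddCommGroup B] [CompleteSpace B]
    {K K' : ℝ≥0} {f : B →+ A} {S : B → B} {T : A → A}
    (hS : ContractingWith K S) (hT : ContractingWith K' T) (hfST : Semiconj f S T)
    {z : A} (hz : ∃ w, T z - z = f w) : ∃ β, z = f β := by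
  obtain ⟨w, hw⟩ := hz
  obtain ⟨β, hβ⟩ : ∃ β, S β - β = w := surjective_sub_id_of_contractingWith hS w
  refine ⟨β, injective_sub_id_of_contractingWith hT ?_⟩
  calc
    T z - z = f (S β - β) := by rw [hw, hβ]
    _ = T (f β) - f β := by rw [map_sub, hfST.eq]

/-- Abstract algebraic core of the proposition that vanishing of reduced
relative symplectic cohomology implies vanishing of relative symplectic
cohomology: if a complete non-archimedean normed (possibly non-unital,
non-associative) ring `A` carries a contracting additive differential `d`
with `d ∘ d = 0` satisfying the Leibniz rule, and there is a closed element
`e` with `‖e‖ < 1` acting as a left unit on homology (i.e. `e·z - z` is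
exact for every closed `z`), then every closed element is exact. -/
theorem homology_vanishes_of_small_unit
    {A : Type*} [NormedAddCommGroup A] [CompleteSpace A]
    (ultra : ∀ x y : A, ‖x + y‖ ≤ max ‖x‖ ‖y‖)
    (mul : A → A → A)
    (left_distrib : ∀ x y z : A, mul x (y + z) = mul x y + mul x z)
    (right_distrib : ∀ x y z : A, mul (x + y) z = mul x z + mul y z)
    (norm_mul_le : ∀ x y : A, ‖mul x y‖ ≤ ‖x‖ * ‖y‖)
    (d : A → A)
    (d_add : ∀ x y : A, d (x + y) = d x + d y)
    (d_contracting : ∀ x : A, ‖d x‖ ≤ ‖x‖)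
    (d_sq : ∀ x : A, d (d x) = 0)
    (hLeibniz : ∀ x z : A, d (mul x z) = mul (d x) z + mul x (d z))
    (e : A) (he_closed : d e = 0) (he_norm : ‖e‖ < 1)
    (he_unit : ∀ z : A, d z = 0 → ∃ w : A, mul e z - z = d w) :
    ∀ z : A, d z = 0 → ∃ β : A, z = d β := by
  have he_contracting : ContractingWith ‖e‖₊ (mul e) :=
    contractingWith_of_norm_map_le (L := .mk' (mul e) (left_distrib e)) he_norm (norm_mul_le e)
  exact fun z hz ↦ homology_vanishes_of_small_unit_general (f := .mk' d d_add) he_contracting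
    he_contracting (commute_mul_left_of_leibniz right_distrib (hLeibniz e) he_closed) (he_unit z hz)
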